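/- arXiv:2106.09156 — 7 statements merged into one kernel-verified Lean document; each statement's English description precedes it below -/
import Mathlib

section
/- Let R be a commutative Noetherian integral domain in which every nonzero prime ideal is maximal (i.e. R has Krull dimension at most 1), let K be its fraction field, and for each maximal ideal 𝔪 let R𝔪^ denote the 𝔪-adic completion of R (the inverse limit of the R/𝔪^s). Set C = ∏_{𝔪 maximal} R𝔪^, a commutative R-algebra with componentwise operations. Then the sequence of R-modules 0 → R → K × C → K ⊗_R C → 0 is exact, where the first map sends r to (the image of r in K, the family of images of r in each R𝔪^), and the second map sends (q, x) to q ⊗ 1 − 1 ⊗ x. In particular R is the pullback of K → K ⊗_R C ← C. -/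
open TensorProduct

noncomputable section

/-- The product of the `𝔪`-adic completions of `R` over all maximal ideals `𝔪`. -/
abbrev AdelicProd (R : Type) [CommRing R] : Type :=
  ∀ 𝔪 : MaximalSpectrum R, AdicCompletion 𝔪.asIdeal R

/-- Elements outside a finitely generated maximal ideal become units in the completion. -/
theorem AdicCompletion.isUnit_algebraMap_of_notMem {R : Type*} [CommRing R] {m : Ideal R}
    [hm : m.IsMaximal] (fg : m.FG) {e : R} (he : e ∉ m) :
    IsUnit (algebraMap R (AdicCompletion m R) e) := by
  obtain ⟨f, i, hi, hfi⟩ := Ideal.IsMaximal.exists_inv hm he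
  have := AdicCompletion.isAdicComplete_self m fg
  have hj := IsAdicComplete.le_jacobson_bot (m.map (algebraMap R (AdicCompletion m R)))
  refine isUnit_of_mul_isUnit_right (x := algebraMap R _ f)
    (Ideal.isUnit_of_sub_one_mem_jacobson_bot _ (hj ?_))
  rw [← map_mul, ← map_one (algebraMap R (AdicCompletion m R)), ← map_sub]
  refine Ideal.mem_map_of_mem _ ?_
  rw [← hfi]
  simpa using hi

/-- Divisibility in a Noetherian ring can be tested in the completions at all maximal ideals. -/
theorem dvd_of_algebraMap_eq_smul {R : Type*} [CommRing R] [IsNoetherianRing R] {a r : R}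
    (h : ∀ m : MaximalSpectrum R, ∃ x : AdicCompletion m.asIdeal R, algebraMap R _ r = a • x) :
    a ∣ r := by
  rw [← Ideal.mem_span_singleton]
  set J := Ideal.span {a}
  by_contra hr
  have hne : J.colon {r} ≠ ⊤ := by
    intro htop
    apply hr
    have : (1 : R) ∈ J.colon {r} := htop ▸ trivial
    simpa [Submodule.mem_colon_singleton] using this
  obtain ⟨m, hm, hle⟩ := Ideal.exists_le_maximal _ hne
  obtain ⟨x, hx⟩ := h ⟨m, hm⟩
  have hmem : (Ideal.Quotient.mk J r) ∈ (⨅ i : ℕ, m ^ i • ⊤ : Submodule R (R ⧸ J)) := by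
    rw [Submodule.mem_iInf]
    intro n
    have hxn := congrArg (AdicCompletion.evalₐ m n) hx
    obtain ⟨y, hy⟩ := Ideal.Quotient.mk_surjective (AdicCompletion.evalₐ m n x)
    rw [AlgHom.commutes, map_smul, ← hy] at hxn
    have h1 : r - a * y ∈ m ^ n := by
      rw [← Ideal.Quotient.eq]
      simpa [Algebra.smul_def] using hxn
    have h2 : Ideal.Quotient.mk J r = (r - a * y) • (1 : R ⧸ J) := by
      rw [Algebra.smul_def, mul_one, Ideal.Quotient.algebraMap_eq, Ideal.Quotient.eq]
      simpa using Ideal.mul_mem_right y J (Ideal.mem_span_singleton_self a)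
    rw [h2]
    exact Submodule.smul_mem_smul h1 trivial
  obtain ⟨⟨s, hs⟩, hsr⟩ := (Ideal.mem_iInf_smul_pow_eq_bot_iff m _).mp hmem
  have h1 : (1 - s) ∈ J.colon {r} := by
    rw [Submodule.mem_colon_singleton, smul_eq_mul, ← Ideal.Quotient.eq_zero_iff_mem, map_mul,
      map_sub, map_one, sub_mul, one_mul, sub_eq_zero]
    simpa [Algebra.smul_def] using hsr.symm
  exact hm.ne_top ((Ideal.eq_top_iff_one _).mpr (by simpa using add_mem (hle h1) hs))

/-- In dimension at most one, every nonzero principal ideal contains a finite product of powers of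
maximal ideals. -/
theorem exists_finset_prod_pow_le_span {R : Type*} [CommRing R] [IsNoetherianRing R]
    (hdim : ∀ p : Ideal R, p.IsPrime → p ≠ ⊥ → p.IsMaximal) {a : R} (ha : a ≠ 0) :
    ∃ (T : Finset (MaximalSpectrum R)) (n : ℕ), ∏ m ∈ T, m.asIdeal ^ n ≤ Ideal.span {a} := by
  set J := Ideal.span {a}
  have hfin : (MaximalSpectrum.asIdeal ⁻¹' J.minimalPrimes).Finite :=
    (J.finite_minimalPrimes_of_isNoetherianRing R).preimage
      fun _ _ _ _ h ↦ MaximalSpectrum.ext h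
  obtain ⟨n, hn⟩ := J.exists_radical_pow_le_of_fg J.radical.fg_of_isNoetherianRing
  refine ⟨hfin.toFinset, n, ?_⟩
  rw [Finset.prod_pow]
  refine (Ideal.pow_right_mono ?_ n).trans hn
  rw [← J.sInf_minimalPrimes]
  refine le_sInf fun p hp ↦ ?_
  have hmax : p.IsMaximal := hdim p hp.isPrime fun h ↦ ha <| by
    simpa [h] using hp.le (Ideal.mem_span_singleton_self a)
  exact Ideal.prod_le_inf.trans (Finset.inf_le (b := ⟨p, hmax⟩) (hfin.mem_toFinset.mpr hp))

theorem exists_notMem_mul_mem_of_prod_pow_le {R : Type*} [CommRing R] {J : Ideal R}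
    {T : Finset (MaximalSpectrum R)} {n : ℕ} (hT : ∏ m ∈ T, m.asIdeal ^ n ≤ J)
    (m : MaximalSpectrum R) :
    ∃ e ∉ m.asIdeal, (m ∉ T → e ∈ J) ∧ ∀ s ∈ m.asIdeal ^ n, s * e ∈ J := by
  classical
  have hnot : ¬ ∏ m' ∈ T.erase m, m'.asIdeal ^ n ≤ m.asIdeal := by
    rw [m.isMaximal.isPrime.prod_le]
    rintro ⟨m', hm', hle⟩
    exact Finset.ne_of_mem_erase hm' <| MaximalSpectrum.ext <|
      m'.isMaximal.eq_of_le m.isMaximal.ne_top (m.isMaximal.isPrime.le_of_pow_le hle)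
  obtain ⟨e, he, hem⟩ := SetLike.not_le_iff_exists.mp hnot
  have heT : m ∉ T → e ∈ J := fun hm ↦ hT (by rwa [Finset.erase_eq_of_notMem hm] at he)
  refine ⟨e, hem, heT, fun s hs ↦ ?_⟩
  by_cases hm : m ∈ T
  · refine hT ?_
    rw [← Finset.mul_prod_erase T _ hm]
    exact Ideal.mul_mem_mul hs he
  · exact J.mul_mem_left s (heT hm)

/-- If `𝔪 ^ n` is contained in `(a)` up to a multiplier outside `𝔪`, then an element of the
completion vanishing modulo `𝔪 ^ n` is a multiple of `a`. -/
theorem AdicCompletion.exists_eq_smul_of_mul_mem {R : Type*} [CommRing R] {m : Ideal R}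
    [hm : m.IsMaximal] (fg : m.FG) {a e : R} {n : ℕ} (he : e ∉ m)
    (h : ∀ s ∈ m ^ n, s * e ∈ Ideal.span {a}) {x : AdicCompletion m R}
    (hx : AdicCompletion.evalₐ m n x = 0) : ∃ z, x = a • z := by
  replace hx : AdicCompletion.eval m R n x = 0 := by
    have hle : m ^ n ≤ m ^ n • ⊤ := (Ideal.mul_top (m ^ n)).ge
    exact (AdicCompletion.factor_evalₐ_eq_eval m x hle).symm.trans (by rw [hx, _root_.map_zero])
  rw [← LinearMap.mem_ker, ← AdicCompletion.pow_smul_top_eq_ker_eval fg] at hx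
  obtain ⟨u, hu⟩ := AdicCompletion.isUnit_algebraMap_of_notMem fg he
  induction hx using Submodule.smul_induction_on' with
  | smul s hs y _ =>
    obtain ⟨c, hc⟩ := Ideal.mem_span_singleton'.mp (h s hs)
    refine ⟨↑u⁻¹ * c • y, ?_⟩
    rw [← Units.inv_mul_cancel_left u (s • y), hu, ← Algebra.smul_def, smul_smul, mul_comm e,
      ← hc, mul_comm c, mul_smul, mul_smul_comm]
  | add x _ y _ hx hy =>
    obtain ⟨z, rfl⟩ := hx
    obtain ⟨w, rfl⟩ := hy
    exact ⟨z + w, (smul_add _ _ _).symm⟩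

/-- `R` is dense in the product of its completions modulo any nonzero `a`. -/
theorem AdelicProd.exists_eq_algebraMap_add_smul {R : Type} [CommRing R] [IsNoetherianRing R]
    (hdim : ∀ p : Ideal R, p.IsPrime → p ≠ ⊥ → p.IsMaximal) {a : R} (ha : a ≠ 0)
    (y : AdelicProd R) : ∃ (r : R) (z : AdelicProd R), y = algebraMap R _ r + a • z := by
  obtain ⟨T, n, hT⟩ := exists_finset_prod_pow_le_span hdim ha
  choose f hf using fun m : MaximalSpectrum R ↦
    Ideal.Quotient.mk_surjective (AdicCompletion.evalₐ m.asIdeal n (y m))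
  obtain ⟨r, hr⟩ := Ideal.exists_forall_sub_mem_ideal
    (I := fun m : T ↦ m.1.asIdeal ^ n) (fun m m' hne ↦ by
      have := m.1.isMaximal
      have := m'.1.isMaximal
      exact (Ideal.isCoprime_of_isMaximal fun h ↦
        hne (Subtype.ext (MaximalSpectrum.ext h))).pow) (fun m ↦ f m)
  have key (m : MaximalSpectrum R) :
      ∃ z, y m - algebraMap R (AdicCompletion m.asIdeal R) r = a • z := by
    have := m.isMaximal
    have fg := m.asIdeal.fg_of_isNoetherianRing
    obtain ⟨e, he, heT, hes⟩ := exists_notMem_mul_mem_of_prod_pow_le hT m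
    by_cases hm : m ∈ T
    · refine AdicCompletion.exists_eq_smul_of_mul_mem fg he hes ?_
      rw [map_sub, AlgHom.commutes, ← hf m,
        Ideal.Quotient.algebraMap_eq, sub_eq_zero.mpr (Ideal.Quotient.eq.mpr (hr ⟨m, hm⟩)).symm]
    · exact AdicCompletion.exists_eq_smul_of_mul_mem (n := 0) fg he
        (fun s _ ↦ Ideal.mul_mem_left _ s (heT hm)) <| by
          have : Subsingleton (R ⧸ m.asIdeal ^ 0) :=
            Ideal.Quotient.subsingleton_iff.mpr (by simp)
          exact Subsingleton.elim _ _
  choose z hz using key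
  exact ⟨r, z, funext fun m ↦ by simp [← hz m]⟩

/-- The adelic approximation (Hasse) square for a 1-dimensional Noetherian domain:
the sequence `0 → R → K × ∏ R𝔪^ → K ⊗ ∏ R𝔪^ → 0` is exact. -/
theorem adelic_hasse_exact (R : Type) [CommRing R] [IsDomain R] [IsNoetherianRing R]
    (hdim : ∀ p : Ideal R, p.IsPrime → p ≠ ⊥ → p.IsMaximal) :
    (Function.Injective fun r : R =>
      ((algebraMap R (FractionRing R) r, algebraMap R (AdelicProd R) r) :
        FractionRing R × AdelicProd R)) ∧
    (∀ (q : FractionRing R) (x : AdelicProd R),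
      q ⊗ₜ[R] (1 : AdelicProd R) - (1 : FractionRing R) ⊗ₜ[R] x = 0 ↔
        ∃ r : R, algebraMap R (FractionRing R) r = q ∧ algebraMap R (AdelicProd R) r = x) ∧
    (∀ t : FractionRing R ⊗[R] AdelicProd R,
      ∃ (q : FractionRing R) (x : AdelicProd R),
        q ⊗ₜ[R] (1 : AdelicProd R) - (1 : FractionRing R) ⊗ₜ[R] x = t) := by
  have hreg {a : R} (ha : a ∈ nonZeroDivisors R) {x y : AdelicProd R} (h : a • x = a • y) :
      x = y :=
    funext fun m ↦ Module.Flat.isSMulRegular_of_nonZeroDivisors ha (congrFun h m)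
  refine ⟨fun r s h ↦ IsFractionRing.injective R (FractionRing R) (congrArg Prod.fst h),
    fun q x ↦ ⟨fun h ↦ ?_, ?_⟩, fun t ↦ ?_⟩
  · obtain ⟨r, a, rfl⟩ := IsLocalization.exists_mk'_eq (nonZeroDivisors R) q
    have hax : algebraMap R (AdelicProd R) r = (a : R) • x := by
      have h1 := congrArg ((a : R) • ·) (sub_eq_zero.mp h)
      rw [TensorProduct.smul_tmul', ← TensorProduct.tmul_smul, IsLocalization.smul_mk'_self, Algebra.algebraMap_eq_smul_one, TensorProduct.smul_tmul,
        ← Algebra.algebraMap_eq_smul_one] at h1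
      obtain ⟨c, hc⟩ := (IsLocalizedModule.eq_iff_exists (nonZeroDivisors R)
        (TensorProduct.mk R (FractionRing R) (AdelicProd R) 1)).mp h1
      exact hreg c.2 hc
    obtain ⟨s, rfl⟩ := dvd_of_algebraMap_eq_smul fun m ↦ ⟨x m, congrFun hax m⟩
    refine ⟨s, ?_, hreg a.2 ?_⟩
    · rw [eq_comm, IsLocalization.mk'_eq_iff_eq_mul, ← map_mul, mul_comm]
    · rw [← hax, map_mul, Algebra.smul_def]
  · rintro ⟨r, rfl, rfl⟩
    rw [Algebra.algebraMap_eq_smul_one, Algebra.algebraMap_eq_smul_one, TensorProduct.smul_tmul,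
      sub_self]
  · obtain ⟨⟨y, a⟩, h⟩ := IsLocalizedModule.surj (nonZeroDivisors R)
      (TensorProduct.mk R (FractionRing R) (AdelicProd R) 1) t
    obtain ⟨r, z, rfl⟩ :=
      AdelicProd.exists_eq_algebraMap_add_smul hdim (nonZeroDivisors.coe_ne_zero a) y
    refine ⟨IsLocalization.mk' _ r a, -z, IsLocalizedModule.smul_injective
      (TensorProduct.mk R (FractionRing R) (AdelicProd R) 1) a ?_⟩
    simp only [h, Submonoid.smul_def, TensorProduct.mk_apply]
    rw [TensorProduct.tmul_neg, sub_neg_eq_add, smul_add, TensorProduct.smul_tmul',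
      IsLocalization.smul_mk'_self, TensorProduct.tmul_add, Algebra.algebraMap_eq_smul_one,
      Algebra.algebraMap_eq_smul_one, TensorProduct.smul_tmul,
      TensorProduct.tmul_smul (a : R) 1 z]
end
end

section
/- The classical Hasse square is a pullback: for every rational number q and every family x = (x_p)_p with x_p ∈ ℤ_p (the p-adic integers, p ranging over all primes), one has q ⊗ 1 = 1 ⊗ x in ℚ ⊗_ℤ (∏_p ℤ_p) if and only if there exists an integer n with (n : ℚ) = q and (n : ℤ_p) = x_p for every prime p. Consequently the commutative square of rings with corners ℤ, ℚ, ∏_p ℤ_p and ℚ ⊗_ℤ ∏_p ℤ_p (the maps out of ℤ being the canonical ones, and the maps into the tensor product being q ↦ q ⊗ 1 and x ↦ 1 ⊗ x) is a pullback square. -/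
open TensorProduct

noncomputable section

instance (p : {p : ℕ // p.Prime}) : Fact p.1.Prime := ⟨p.2⟩

/-- The product of the `p`-adic integers over all primes `p`. -/
abbrev ProdPadicInt : Type := ∀ p : {p : ℕ // p.Prime}, ℤ_[p.1]

/-- The ring homomorphism `ℚ ⊗_ℤ ∏_p ℤ_p → ℚ_p` sending `q ⊗ x` to `q * x_p`. -/
def tensorToPadic (p : {p : ℕ // p.Prime}) : ℚ ⊗[ℤ] ProdPadicInt →ₐ[ℤ] ℚ_[p.1] :=
  Algebra.TensorProduct.productMap (Rat.castHom ℚ_[p.1]).toIntAlgHom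
    (PadicInt.Coe.ringHom.comp (Pi.evalRingHom _ p)).toIntAlgHom

theorem tensorToPadic_tmul (p : {p : ℕ // p.Prime}) (q : ℚ) (x : ProdPadicInt) :
    tensorToPadic p (q ⊗ₜ[ℤ] x) = (q : ℚ_[p.1]) * (x p : ℚ_[p.1]) := by
  rfl

theorem Rat.den_eq_one_of_forall_padic_norm_le_one {q : ℚ}
    (h : ∀ p : {p : ℕ // p.Prime}, ‖(q : ℚ_[p.1])‖ ≤ 1) : q.den = 1 := by
  by_contra hq
  obtain ⟨p, hp, hdvd⟩ := Nat.exists_prime_and_dvd hq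
  have : Fact p.Prime := ⟨hp⟩
  have hunit := PadicInt.isUnit_iff.1 (PadicInt.isUnit_den q (h ⟨p, hp⟩))
  exact (PadicInt.norm_natCast_lt_one_iff.2 hdvd).ne hunit

theorem exists_int_of_tmul_one_eq_one_tmul {q : ℚ} {x : ProdPadicInt}
    (h : q ⊗ₜ[ℤ] (1 : ProdPadicInt) = (1 : ℚ) ⊗ₜ[ℤ] x) :
    ∃ n : ℤ, (n : ℚ) = q ∧ ∀ p : {p : ℕ // p.Prime}, (n : ℤ_[p.1]) = x p := by
  have hx (p : {p : ℕ // p.Prime}) : (q : ℚ_[p.1]) = x p := by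
    simpa [tensorToPadic_tmul] using congrArg (tensorToPadic p) h
  have hq : (q.num : ℚ) = q :=
    Rat.coe_int_num_of_den_eq_one <| Rat.den_eq_one_of_forall_padic_norm_le_one fun p ↦ by
      rw [hx p]
      exact (x p).norm_le_one
  refine ⟨q.num, hq, fun p ↦ PadicInt.ext ?_⟩
  rw [← hx p, ← hq]
  simp

theorem intCast_tmul_one (n : ℤ) :
    (n : ℚ) ⊗ₜ[ℤ] (1 : ProdPadicInt) = (1 : ℚ) ⊗ₜ[ℤ] (n : ProdPadicInt) := by
  simpa using TensorProduct.smul_tmul n (1 : ℚ) (1 : ProdPadicInt)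

/-- The classical Hasse square is a pullback: `q ⊗ 1 = 1 ⊗ x` in `ℚ ⊗_ℤ ∏_p ℤ_p`
iff `q` and `x` both come from an integer `n`; moreover such an `n` is then
unique, so `ℤ` is the pullback of `ℚ → ℚ ⊗_ℤ ∏_p ℤ_p ← ∏_p ℤ_p`. -/
theorem hasse_square_pullback :
    (∀ (q : ℚ) (x : ProdPadicInt),
      q ⊗ₜ[ℤ] (1 : ProdPadicInt) = (1 : ℚ) ⊗ₜ[ℤ] x ↔
        ∃ n : ℤ, (n : ℚ) = q ∧ ∀ p : {p : ℕ // p.Prime}, (n : ℤ_[p.1]) = x p) ∧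
    (∀ (q : ℚ) (x : ProdPadicInt),
      q ⊗ₜ[ℤ] (1 : ProdPadicInt) = (1 : ℚ) ⊗ₜ[ℤ] x →
        ∃! n : ℤ, (n : ℚ) = q ∧ ∀ p : {p : ℕ // p.Prime}, (n : ℤ_[p.1]) = x p) := by
  refine ⟨fun q x ↦ ⟨exists_int_of_tmul_one_eq_one_tmul, ?_⟩, fun q x h ↦ ?_⟩
  · rintro ⟨n, rfl, hn⟩
    obtain rfl : (n : ProdPadicInt) = x := funext hn
    exact intCast_tmul_one n
  · obtain ⟨n, hn, hx⟩ := exists_int_of_tmul_one_eq_one_tmul h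
    exact ⟨n, ⟨hn, hx⟩, fun m hm ↦ Int.cast_injective (hm.1.trans hn.symm)⟩
end
end

section
/- The topology of a Noetherian sober space is determined by its specialization order: if t₁ and t₂ are two topologies on the same set X, each of which is Noetherian, T0 and quasi-sober, and if for all points x, y the specialization relations agree (x lies in the t₁-closure of {y} if and only if x lies in the t₂-closure of {y}), then t₁ = t₂. -/
open TopologicalSpace

/-- In a Noetherian quasi-sober space the closed sets are exactly the finite unions of closures
of points. -/
theorem isClosed_iff_exists_finite_biUnion_closure_singleton {X : Type*} [TopologicalSpace X]
    [NoetherianSpace X] [QuasiSober X] {Z : Set X} :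
    IsClosed Z ↔ ∃ F : Set X, F.Finite ∧ Z = ⋃ x ∈ F, closure {x} := by
  constructor
  · intro hZ
    obtain ⟨S, hfin, hclosed, hirr, rfl⟩ :=
      NoetherianSpace.exists_finite_set_isClosed_irreducible hZ
    choose g hg using fun T : S => QuasiSober.sober (hirr T T.2) (hclosed T T.2)
    have := hfin.to_subtype
    refine ⟨Set.range g, Set.finite_range g, ?_⟩
    rw [Set.biUnion_range, Set.sUnion_eq_iUnion]
    exact Set.iUnion_congr fun T => (hg T).def.symm
  · rintro ⟨F, hF, rfl⟩
    exact hF.isClosed_biUnion fun _ _ => isClosed_closure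

/-- The topology of a Noetherian sober space is determined by its specialization
order: two Noetherian, T0, quasi-sober topologies on the same set with the same
specialization relation coincide. -/
theorem noetherian_sober_topology_eq_of_specialization_eq (X : Type)
    (t₁ t₂ : TopologicalSpace X)
    (h₁n : @NoetherianSpace X t₁) (h₁t : @T0Space X t₁) (h₁s : @QuasiSober X t₁)
    (h₂n : @NoetherianSpace X t₂) (h₂t : @T0Space X t₂) (h₂s : @QuasiSober X t₂)
    (hspec : ∀ x y : X, x ∈ @closure X t₁ {y} ↔ x ∈ @closure X t₂ {y}) :
    t₁ = t₂ := by
  refine TopologicalSpace.ext_isClosed fun Z => ?_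
  have hclosure : ∀ y, @closure X t₁ {y} = @closure X t₂ {y} := fun y =>
    Set.ext fun x => hspec x y
  rw [@isClosed_iff_exists_finite_biUnion_closure_singleton X t₁,
    @isClosed_iff_exists_finite_biUnion_closure_singleton X t₂]
  simp only [hclosure]
end

section
/- Let (R i)_{i ∈ ι} be a family of commutative rings, P = ∏_i R i the product ring, and (N i)_i a family with each N i a module over R i; regard ∏_i N i as a P-module with componentwise action. Then for every index j, the R j-linear map R j ⊗_P (∏_i N i) → N j determined by r ⊗ n ↦ r • (n j) is an isomorphism. (Equivalently, the counit of the adjunction between P-modules and families of R i-modules is an isomorphism, so the product functor is fully faithful.) -/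
open TensorProduct

noncomputable section

/-- Each factor `R j` of a product ring `∏ i, R i` is an algebra over the product
via the projection homomorphism. -/
instance instEvalAlgebra {ι : Type} (R : ι → Type) [∀ i, CommRing (R i)] (j : ι) :
    Algebra (∀ i, R i) (R j) :=
  (Pi.evalRingHom R j).toAlgebra

/-- In `R j ⊗ ∏ i, N i`, every pure tensor is supported at the index `j`. -/
theorem tmul_eq_one_tmul_single {ι : Type} [DecidableEq ι] (R : ι → Type) [∀ i, CommRing (R i)]
    (N : ι → Type) [∀ i, AddCommGroup (N i)] [∀ i, Module (R i) (N i)] (j : ι)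
    (r : R j) (n : ∀ i, N i) :
    r ⊗ₜ[∀ i, R i] n = (1 : R j) ⊗ₜ[∀ i, R i] (Pi.single j (r • n j) : ∀ i, N i) := by
  have h_single : (Pi.single j (r • n j) : ∀ i, N i) = (Pi.single j r : ∀ i, R i) • n := by
    ext i
    rcases eq_or_ne i j with rfl | hij
    · simp
    · simp [hij]
  have h_smul : (Pi.single j r : ∀ i, R i) • (1 : R j) = r := by
    simp [Algebra.smul_def, RingHom.algebraMap_toAlgebra]
  rw [h_single, ← TensorProduct.smul_tmul, h_smul]

/-- The counit of the adjunction between `∏ i, R i`-modules and families of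
`R i`-modules is an isomorphism: for any family `(N i)` of `R i`-modules and any
index `j`, the map `R j ⊗_{∏ i, R i} ∏ i, N i → N j`, `r ⊗ n ↦ r • n j`, is
bijective. -/
theorem base_change_of_product_bijective {ι : Type} (R : ι → Type) [∀ i, CommRing (R i)]
    (N : ι → Type) [∀ i, AddCommGroup (N i)] [∀ i, Module (R i) (N i)] (j : ι) :
    ∃ e : (R j ⊗[∀ i, R i] (∀ i, N i)) →ₗ[R j] N j,
      (∀ (r : R j) (n : ∀ i, N i), e (r ⊗ₜ[∀ i, R i] n) = r • n j) ∧
      Function.Bijective e := by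
  classical
  let _ : Module (∀ i, R i) (N j) := Module.compHom (N j) (Pi.evalRingHom R j)
  have : IsScalarTower (∀ i, R i) (R j) (N j) := ⟨fun p r n => mul_smul (p j) r n⟩
  let eval : (∀ i, N i) →ₗ[∀ i, R i] N j :=
    { toFun := fun n => n j
      map_add' := fun _ _ => rfl
      map_smul' := fun _ _ => rfl }
  have h_tmul (r : R j) (n : ∀ i, N i) :
      eval.liftBaseChange (R j) (r ⊗ₜ[∀ i, R i] n) = r • n j :=
    LinearMap.liftBaseChange_tmul ..
  have h_single (t : R j ⊗[∀ i, R i] (∀ i, N i)) :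
      (1 : R j) ⊗ₜ[∀ i, R i] (Pi.single j (eval.liftBaseChange (R j) t) : ∀ i, N i) = t := by
    induction t with
    | zero => simp
    | tmul r n => rw [h_tmul, ← tmul_eq_one_tmul_single]
    | add x y hx hy => rw [map_add, Pi.single_add, TensorProduct.tmul_add, hx, hy]
  refine ⟨eval.liftBaseChange (R j), h_tmul, fun x y hxy => ?_, fun n => ?_⟩
  · rw [← h_single x, hxy, h_single]
  · exact ⟨1 ⊗ₜ Pi.single j n, by rw [h_tmul]; simp⟩
end
end

section
/- Let V, N, Q be categories, h : N ⥤ Q a functor, and v : V ⥤ Q a functor admitting a right adjoint; assume V has pullbacks. Let S denote the category of sections of the cospan, i.e. the comma category Comma(v × h, Δ_Q) of the functor V × N ⥤ Q × Q, (u,n) ↦ (v(u), h(n)), over the diagonal Q ⥤ Q × Q; its objects are tuples (u, n, q, α : v(u) → q, β : h(n) → q). Then the functor ι : Comma(v, h) ⥤ S sending (u, n, f : v(u) → h(n)) to (u, n, h(n), f, id_{h(n)}) is fully faithful and admits a right adjoint (quasi-coherification: it sends (u, n, q, α, β) to (u', n, f') where u' is the pullback in V of the adjunct u → vʳ(q)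 of α along vʳ(β) : vʳ(h(n)) → vʳ(q), and f' is the adjunct of the projection u' → vʳ(h(n))). -/
open CategoryTheory

universe v₁ v₂ v₃ u₁ u₂ u₃

variable {V : Type u₁} {N : Type u₂} {Q : Type u₃}
  [Category.{v₁} V] [Category.{v₂} N] [Category.{v₃} Q]

/-- The inclusion of the quasi-coherent sections `Comma(v, h)` into the category
of all sections of the cospan `N ⥤ Q ⥢ V`, sending `(u, n, f : v(u) → h(n))` to
`(u, n, h(n), f, id)`. -/
def qcSectionsIncl (v : V ⥤ Q) (h : N ⥤ Q) :
    Comma v h ⥤ Comma (v.prod h) (Functor.diag Q) where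
  obj X :=
    { left := (X.left, X.right)
      right := h.obj X.right
      hom := (X.hom, 𝟙 (h.obj X.right)) }
  map {X Y} f :=
    { left := (f.left, f.right)
      right := h.map f.right
      w := by
        apply Prod.ext
        · simp
        · simp }

/-- The quasi-coherification of a section `(u, n, q, α, β)`: the comma object over `n` whose
`V`-component is the pullback of the adjunct of `α` along `r(β)`. -/
noncomputable def qcSectionsCoreflectionObj {v : V ⥤ Q} {h : N ⥤ Q} {r : Q ⥤ V} (adj : v ⊣ r)
    [Limits.HasPullbacks V] (Y : Comma (v.prod h) (Functor.diag Q)) : Comma v h where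
  left := Limits.pullback (adj.homEquiv Y.left.1 Y.right Y.hom.1)
    (r.map (X := h.obj Y.left.2) (Y := Y.right) Y.hom.2)
  right := Y.left.2
  hom := (adj.homEquiv _ _).symm (Limits.pullback.snd _ _)

theorem CategoryTheory.Adjunction.map_comp_homEquiv_symm_eq_iff {v : V ⥤ Q} {r : Q ⥤ V}
    (adj : v ⊣ r) {x y : V} {q : Q} (l : x ⟶ y) (s : y ⟶ r.obj q) (f : v.obj x ⟶ q) :
    v.map l ≫ (adj.homEquiv y q).symm s = f ↔ adj.homEquiv x q f = l ≫ s := by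
  rw [← adj.homEquiv_naturality_left_symm, Equiv.symm_apply_eq, eq_comm]

/-- Morphisms from a quasi-coherent section to an arbitrary section correspond to morphisms
into its quasi-coherification. -/
noncomputable def qcSectionsHomEquiv {v : V ⥤ Q} {h : N ⥤ Q} {r : Q ⥤ V} (adj : v ⊣ r)
    [Limits.HasPullbacks V] (X : Comma v h) (Y : Comma (v.prod h) (Functor.diag Q)) :
    ((qcSectionsIncl v h).obj X ⟶ Y) ≃ (X ⟶ qcSectionsCoreflectionObj adj Y) where
  toFun f :=
    { left := Limits.pullback.lift f.left.1 (adj.homEquiv _ _ (X.hom ≫ h.map f.left.2)) (by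
        have h₁ : v.map f.left.1 ≫ Y.hom.1 = X.hom ≫ f.right := congrArg Prod.fst f.w
        have h₂ : h.map f.left.2 ≫ Y.hom.2 = 𝟙 _ ≫ f.right := congrArg Prod.snd f.w
        exact (adj.homEquiv_naturality_left_square_iff _ _ _ _).2 <| h₁.trans <|
          (congrArg (X.hom ≫ ·) (h₂.trans (Category.id_comp _)).symm).trans
            (Category.assoc _ _ _).symm)
      right := f.left.2
      w := (adj.map_comp_homEquiv_symm_eq_iff _ _ _).2 (Limits.pullback.lift_snd _ _ _).symm }
  invFun g :=
    { left := (g.left ≫ Limits.pullback.fst _ _, g.right)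
      right := h.map g.right ≫ Y.hom.2
      w := by
        apply Prod.ext
        · refine ((adj.homEquiv_naturality_left_square_iff _ _ _ _).1 ?_).trans
            (Category.assoc X.hom (h.map g.right) Y.hom.2)
          exact (Category.assoc _ _ _).trans <|
            (congrArg (g.left ≫ ·) Limits.pullback.condition).trans <|
            (Category.assoc _ _ _).symm.trans <|
            congrArg (· ≫ r.map _) ((adj.map_comp_homEquiv_symm_eq_iff _ _ _).1 g.w).symm
        · exact (Category.id_comp _).symm }
  left_inv f := by
    have h₂ : h.map f.left.2 ≫ Y.hom.2 = 𝟙 _ ≫ f.right := congrArg Prod.snd f.w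
    apply CommaMorphism.ext
    · exact Prod.ext (Limits.pullback.lift_fst _ _ _) rfl
    · exact h₂.trans (Category.id_comp _)
  right_inv g := by
    apply CommaMorphism.ext
    · apply Limits.pullback.hom_ext
      · exact Limits.pullback.lift_fst _ _ _
      · exact (Limits.pullback.lift_snd _ _ _).trans
          ((adj.map_comp_homEquiv_symm_eq_iff _ _ _).1 g.w)
    · rfl

theorem qcSectionsHomEquiv_naturality_left {v : V ⥤ Q} {h : N ⥤ Q} {r : Q ⥤ V} (adj : v ⊣ r)
    [Limits.HasPullbacks V] {X X' : Comma v h} (Y : Comma (v.prod h) (Functor.diag Q))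
    (f : X' ⟶ X) (g : (qcSectionsIncl v h).obj X ⟶ Y) :
    qcSectionsHomEquiv adj X' Y ((qcSectionsIncl v h).map f ≫ g) =
      f ≫ qcSectionsHomEquiv adj X Y g := by
  obtain ⟨g, rfl⟩ := (qcSectionsHomEquiv adj X Y).symm.surjective g
  rw [Equiv.apply_symm_apply, ← Equiv.eq_symm_apply]
  apply CommaMorphism.ext
  · exact Prod.ext (Category.assoc _ _ _).symm rfl
  · exact (Category.assoc _ _ _).symm.trans
      (congrArg (· ≫ Y.hom.2) (h.map_comp f.right g.right).symm)

instance (v : V ⥤ Q) (h : N ⥤ Q) : (qcSectionsIncl v h).Faithful where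
  map_injective hfg :=
    CommaMorphism.ext (congrArg (fun k => k.left.1) hfg) (congrArg (fun k => k.left.2) hfg)

instance (v : V ⥤ Q) (h : N ⥤ Q) : (qcSectionsIncl v h).Full where
  map_surjective {X Y} f := by
    have h₁ : v.map f.left.1 ≫ Y.hom = X.hom ≫ f.right := congrArg Prod.fst f.w
    have h₂ : h.map f.left.2 ≫ 𝟙 _ = 𝟙 _ ≫ f.right := congrArg Prod.snd f.w
    have h₃ : h.map f.left.2 = f.right :=
      (Category.comp_id _).symm.trans (h₂.trans (Category.id_comp _))
    exact ⟨{ left := f.left.1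
             right := f.left.2
             w := h₁.trans (congrArg (X.hom ≫ ·) h₃.symm) }, CommaMorphism.ext rfl h₃⟩

/-- Quasi-coherification: if `v` admits a right adjoint and `V` has pullbacks,
then the inclusion of the quasi-coherent sections into all sections of the
cospan is fully faithful and admits a right adjoint. -/
theorem qcSectionsIncl_fullyFaithful_isLeftAdjoint (v : V ⥤ Q) (h : N ⥤ Q)
    [v.IsLeftAdjoint] [Limits.HasPullbacks V] :
    (qcSectionsIncl v h).Full ∧ (qcSectionsIncl v h).Faithful ∧
      (qcSectionsIncl v h).IsLeftAdjoint := by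
  refine ⟨inferInstance, inferInstance, ?_⟩
  have adj := Adjunction.ofIsLeftAdjoint v
  exact (Adjunction.adjunctionOfEquivRight (qcSectionsHomEquiv adj)
    (fun _ _ Y f g => qcSectionsHomEquiv_naturality_left adj Y f g)).isLeftAdjoint
end

section
/- Let V, N, Q be categories, v : V ⥤ Q a functor, and h : N ⥤ Q a functor admitting a right adjoint; assume N has pullbacks. Let S denote the category of sections of the cospan, i.e. the comma category Comma(v × h, Δ_Q) of the functor V × N ⥤ Q × Q, (u,n) ↦ (v(u), h(n)), over the diagonal Q ⥤ Q × Q; its objects are tuples (u, n, q, α : v(u) → q, β : h(n) → q). Then the functor Comma(h, v) ⥤ S sending (n, u, g : h(n) → v(u)) to (u, n, v(u), id_{v(u)}, g) is fully faithful and admits a right adjoint (extendification: it sends (u, n, q, α, β) to (n', u, g') where n' is the pullback in N of the adjunct n → hʳ(q) of β along hʳ(α) : hʳ(v(u)) → hʳ(q)). -/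
open CategoryTheory

universe v₁ v₂ v₃ u₁ u₂ u₃

variable {V : Type u₁} {N : Type u₂} {Q : Type u₃}
  [Category.{v₁} V] [Category.{v₂} N] [Category.{v₃} Q]

/-- The inclusion of the extended sections `Comma(h, v)` into the category of
all sections of the cospan `N ⥤ Q ⥢ V`, sending `(n, u, g : h(n) → v(u))` to
`(u, n, v(u), id, g)`. -/
def extSectionsIncl (v : V ⥤ Q) (h : N ⥤ Q) :
    Comma h v ⥤ Comma (v.prod h) (Functor.diag Q) where
  obj X :=
    { left := (X.right, X.left)
      right := v.obj X.right
      hom := (𝟙 (v.obj X.right), X.hom) }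
  map {X Y} f :=
    { left := (f.right, f.left)
      right := v.map f.right
      w := by
        apply Prod.ext
        · simp
        · simp }

namespace ExtSections

open Limits

section FullyFaithful

variable (v : V ⥤ Q) (h : N ⥤ Q)

lemma right_eq {X : Comma h v} {Y : Comma (v.prod h) (Functor.diag Q)}
    (f : (extSectionsIncl v h).obj X ⟶ Y) : f.right = v.map f.left.1 ≫ Y.hom.1 := by
  have w : v.map f.left.1 ≫ Y.hom.1 = 𝟙 _ ≫ f.right := congrArg Prod.fst f.w
  exact (w.trans (Category.id_comp _)).symm

lemma map_left_snd_comp {X : Comma h v} {Y : Comma (v.prod h) (Functor.diag Q)}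
    (f : (extSectionsIncl v h).obj X ⟶ Y) :
    h.map f.left.2 ≫ Y.hom.2 = (X.hom ≫ v.map f.left.1) ≫ Y.hom.1 := by
  have w : h.map f.left.2 ≫ Y.hom.2 = X.hom ≫ f.right := congrArg Prod.snd f.w
  rw [w, right_eq]
  exact (Category.assoc _ _ _).symm

/-- A morphism out of an extended section is determined by its components in `V` and `N`. -/
lemma hom_ext {X : Comma h v} {Y : Comma (v.prod h) (Functor.diag Q)}
    {f g : (extSectionsIncl v h).obj X ⟶ Y} (h₁ : f.left.1 = g.left.1)
    (h₂ : f.left.2 = g.left.2) : f = g := by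
  apply Comma.hom_ext
  · exact Prod.ext h₁ h₂
  · rw [right_eq, right_eq, h₁]

instance : (extSectionsIncl v h).Faithful where
  map_injective {X Y} f g e := by
    apply Comma.hom_ext
    · exact congrArg (fun k => k.left.2) e
    · exact congrArg (fun k => k.left.1) e

instance : (extSectionsIncl v h).Full where
  map_surjective {X Y} f := by
    refine ⟨{ left := f.left.2, right := f.left.1, w := ?_ }, hom_ext v h rfl rfl⟩
    exact (map_left_snd_comp v h f).trans (Category.comp_id _)

end FullyFaithful

section Extendification

variable {v : V ⥤ Q} {h : N ⥤ Q} {r : Q ⥤ N} (adj : h ⊣ r) [HasPullbacks N]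

/-- The extendification of a section `(u, n, q, α, β)`: its component in `N` is the pullback of
the adjunct of `β` along `r(α)`. -/
noncomputable def extendification (Y : Comma (v.prod h) (Functor.diag Q)) : Comma h v where
  left := pullback (adj.homEquiv Y.left.2 Y.right Y.hom.2) (r.map Y.hom.1)
  right := Y.left.1
  hom := (adj.homEquiv _ _).symm (pullback.snd _ _)

/-- The canonical morphism from the extendification of a section to that section. -/
noncomputable def extendificationCounit (Y : Comma (v.prod h) (Functor.diag Q)) :
    (extSectionsIncl v h).obj (extendification adj Y) ⟶ Y where
  left := (𝟙 _, pullback.fst _ _)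
  right := Y.hom.1
  w := by
    apply Prod.ext
    · change v.map (𝟙 _) ≫ Y.hom.1 = 𝟙 _ ≫ Y.hom.1
      rw [v.map_id]
      rfl
    · change h.map (pullback.fst _ _) ≫ Y.hom.2 =
        (adj.homEquiv _ _).symm (pullback.snd _ _) ≫ Y.hom.1
      apply (adj.homEquiv _ _).injective
      rw [adj.homEquiv_naturality_left, adj.homEquiv_naturality_right, Equiv.apply_symm_apply]
      exact pullback.condition

/-- The factorization of a morphism from an extended section through the extendification. -/
noncomputable def extendificationLift {X : Comma h v} {Y : Comma (v.prod h) (Functor.diag Q)}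
    (f : (extSectionsIncl v h).obj X ⟶ Y) : X ⟶ extendification adj Y where
  left := pullback.lift f.left.2 (adj.homEquiv _ _ (X.hom ≫ v.map f.left.1)) <|
    (adj.homEquiv_naturality_left _ _).symm.trans <|
      (congrArg (adj.homEquiv _ _) (map_left_snd_comp v h f)).trans
        (adj.homEquiv_naturality_right _ _)
  right := f.left.1
  w :=
    (adj.homEquiv_naturality_left_symm _ _).symm.trans <|
      (congrArg (adj.homEquiv _ _).symm (pullback.lift_snd _ _ _)).trans
        (Equiv.symm_apply_apply _ _)

/-- Morphisms from an extended section to a section correspond to morphisms to its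
extendification. -/
noncomputable def extendificationHomEquiv (X : Comma h v)
    (Y : Comma (v.prod h) (Functor.diag Q)) :
    ((extSectionsIncl v h).obj X ⟶ Y) ≃ (X ⟶ extendification adj Y) where
  toFun f := extendificationLift adj f
  invFun g := (extSectionsIncl v h).map g ≫ extendificationCounit adj Y
  left_inv f := by
    apply hom_ext
    · exact Category.comp_id _
    · exact pullback.lift_fst _ _ _
  right_inv g := by
    apply Comma.hom_ext
    · apply pullback.hom_ext
      · exact pullback.lift_fst _ _ _
      · refine (pullback.lift_snd _ _ _).trans ?_
        change adj.homEquiv _ _ (X.hom ≫ v.map (g.right ≫ 𝟙 _)) = _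
        rw [Category.comp_id, ← g.w]
        change adj.homEquiv _ _ (h.map g.left ≫ (adj.homEquiv _ _).symm (pullback.snd _ _)) = _
        rw [adj.homEquiv_naturality_left]
        exact congrArg (g.left ≫ ·) (Equiv.apply_symm_apply _ _)
    · exact Category.comp_id _

lemma isLeftAdjoint_extSectionsIncl (adj : h ⊣ r) : (extSectionsIncl v h).IsLeftAdjoint :=
  (Adjunction.adjunctionOfEquivRight (extendificationHomEquiv adj) fun X' X Y f g => by
    rw [← Equiv.eq_symm_apply]
    obtain ⟨g, rfl⟩ := (extendificationHomEquiv adj X Y).symm.surjective g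
    rw [Equiv.apply_symm_apply]
    change _ ≫ _ ≫ _ = (extSectionsIncl v h).map (f ≫ g) ≫ _
    rw [Functor.map_comp, Category.assoc]).isLeftAdjoint

end Extendification

end ExtSections

/-- Extendification: if `h` admits a right adjoint and `N` has pullbacks, then
the inclusion of the extended sections into all sections of the cospan is fully
faithful and admits a right adjoint. -/
theorem extSectionsIncl_fullyFaithful_isLeftAdjoint (v : V ⥤ Q) (h : N ⥤ Q)
    [h.IsLeftAdjoint] [Limits.HasPullbacks N] :
    (extSectionsIncl v h).Full ∧ (extSectionsIncl v h).Faithful ∧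
      (extSectionsIncl v h).IsLeftAdjoint := by
  exact ⟨inferInstance, inferInstance,
    ExtSections.isLeftAdjoint_extSectionsIncl (Adjunction.ofIsLeftAdjoint h)⟩
end

section
/- Let k be a field of characteristic 2 and let E = C₂ × C₂ be the Klein four-group. Then for every natural number n, the group cohomology H^n(E; k) of E with coefficients in the trivial representation k is a finite-dimensional k-vector space of dimension n + 1. (This is the additive content of the isomorphism of graded rings H^•(E; k) ≅ k[u, v] with u, v in degree 1.) -/
noncomputable section

/-- The Klein four-group `C₂ × C₂` (written multiplicatively). -/
abbrev KleinFour : Type := Multiplicative (ZMod 2) × Multiplicative (ZMod 2)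

open CategoryTheory groupCohomology

/-- The diagonal action on functions `C₂ → A`, where `G` acts on `C₂` by translation through
`φ : G →* C₂`. -/
def Representation.funTwo {k G V : Type} [CommRing k] [Group G] [AddCommGroup V] [Module k V]
    (φ : G →* Multiplicative (ZMod 2)) (ρ : Representation k G V) :
    Representation k G (Multiplicative (ZMod 2) → V) where
  toFun g :=
    { toFun := fun f c => ρ g (f (c * φ g))
      map_add' := fun f f' => by ext c; simp
      map_smul' := fun r f => by ext c; simp }
  map_one' := LinearMap.ext fun f => funext fun c => by simp
  map_mul' g h := LinearMap.ext fun f => funext fun c => by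
    simp [mul_assoc]

/-- The representation on functions `C₂ → A` attached to `φ : G →* C₂`. -/
abbrev Rep.funTwo {k G : Type} [CommRing k] [Group G] (φ : G →* Multiplicative (ZMod 2))
    (A : Rep.{0} k G) : Rep.{0} k G :=
  Rep.of (A.ρ.funTwo φ)

namespace Rep.funTwo

section

variable {k G : Type} [CommRing k] [Group G] (φ : G →* Multiplicative (ZMod 2))

/-- The inclusion of constant functions. -/
def const (A : Rep.{0} k G) : A ⟶ funTwo φ A :=
  Rep.ofHom (σ := (funTwo φ A).ρ)
    { toFun := fun a _ => a
      map_add' := fun _ _ => rfl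
      map_smul' := fun _ _ => rfl
      isIntertwining' := fun _ => rfl }

lemma eq_zero_or_one (c : Multiplicative (ZMod 2)) : c = .ofAdd 0 ∨ c = .ofAdd 1 := by
  revert c
  decide

/-- The sum of the two values of a function `C₂ → A`. -/
def sum (A : Rep.{0} k G) : funTwo φ A ⟶ A :=
  Rep.ofHom (ρ := (funTwo φ A).ρ) (σ := A.ρ)
    { toFun := fun f => f (.ofAdd 0) + f (.ofAdd 1)
      map_add' := fun _ _ => add_add_add_comm _ _ _ _
      map_smul' := fun r _ => (smul_add r _ _).symm
      isIntertwining' := fun g => by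
        refine LinearMap.ext fun f => ?_
        change A.ρ g (f (.ofAdd 0 * φ g)) + A.ρ g (f (.ofAdd 1 * φ g)) =
          A.ρ g (f (.ofAdd 0) + f (.ofAdd 1))
        rw [map_add]
        rcases eq_zero_or_one (φ g) with h | h <;> rw [h]
        · rfl
        · exact add_comm _ _ }

/-- Functoriality of `Rep.funTwo` in the coefficients. -/
def map {A B : Rep.{0} k G} (u : A ⟶ B) : funTwo φ A ⟶ funTwo φ B :=
  Rep.ofHom (ρ := (funTwo φ A).ρ) (σ := (funTwo φ B).ρ)
    { toFun := fun f c => u.hom (f c)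
      map_add' := fun f f' => funext fun c => map_add u.hom _ _
      map_smul' := fun r f => funext fun c => map_smul u.hom _ _
      isIntertwining' := fun g => by
        refine LinearMap.ext fun f => funext fun c => ?_
        exact Rep.hom_comm_apply u g _ }

end

section

variable {k G : Type} [Field k] [CharP k 2] [Group G] (φ : G →* Multiplicative (ZMod 2))

lemma add_self_eq_zero (A : Rep.{0} k G) (a : A) : a + a = 0 := by
  rw [← two_smul k a, CharTwo.two_eq_zero, zero_smul]

lemma const_comp_sum (A : Rep.{0} k G) : const φ A ≫ sum φ A = 0 := by
  ext a
  exact add_self_eq_zero A a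

/-- The short complex `A ⟶ (C₂ → A) ⟶ A`. -/
abbrev shortComplex (A : Rep.{0} k G) : ShortComplex (Rep.{0} k G) :=
  ShortComplex.mk (const φ A) (sum φ A) (const_comp_sum φ A)

lemma shortExact (A : Rep.{0} k G) : (shortComplex φ A).ShortExact where
  exact := by
    apply (forget₂ _ (ModuleCat k)).reflects_exact_of_faithful
    rw [ShortComplex.moduleCat_exact_iff]
    intro f hf
    have hf' : (f : Multiplicative (ZMod 2) → A) (.ofAdd 0) +
        (f : Multiplicative (ZMod 2) → A) (.ofAdd 1) = 0 := hf
    refine ⟨(f : Multiplicative (ZMod 2) → A) (.ofAdd 0), funext fun c => ?_⟩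
    change (f : Multiplicative (ZMod 2) → A) (.ofAdd 0) = (f : Multiplicative (ZMod 2) → A) c
    rcases eq_zero_or_one c with rfl | rfl
    · rfl
    · rw [eq_neg_of_add_eq_zero_left hf', neg_eq_of_add_eq_zero_left (add_self_eq_zero A _)]
  mono_f := (Rep.mono_iff_injective _).2 fun a b h => congrFun h 1
  epi_g := (Rep.epi_iff_surjective _).2 fun a => by
    refine ⟨fun c => if c = .ofAdd 0 then a else 0, ?_⟩
    exact (congrArg₂ _ (if_pos rfl) (if_neg (by decide))).trans (add_zero (M := A) a)

/-- Functoriality of `Rep.funTwo.shortComplex` in the coefficients. -/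
def shortComplexMap {A B : Rep.{0} k G} (u : A ⟶ B) : shortComplex φ A ⟶ shortComplex φ B where
  τ₁ := u
  τ₂ := map φ u
  τ₃ := u
  comm₁₂ := rfl
  comm₂₃ := by
    ext f
    exact (map_add u.hom _ _).symm

lemma δ_naturality {A B : Rep.{0} k G} (u : A ⟶ B) (n : ℕ) :
    δ (shortExact φ A) n (n + 1) rfl ≫ groupCohomology.map (.id G) u (n + 1) =
      groupCohomology.map (.id G) u n ≫ δ (shortExact φ B) n (n + 1) rfl :=
  groupCohomology.δ_naturality (shortExact φ A) (shortExact φ B) (shortComplexMap φ u) n (n + 1) rfl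

end

end Rep.funTwo

section LongExactSequence

variable {k G : Type} [Field k] [Group G] {X : ShortComplex (Rep.{0} k G)}

lemma groupCohomology.exact_map_map (hX : X.ShortExact) (n : ℕ) :
    Function.Exact (groupCohomology.map (.id G) X.f n).hom
      (groupCohomology.map (.id G) X.g n).hom :=
  (ShortComplex.ShortExact.moduleCat_exact_iff_function_exact _).1 (mapShortComplex₂_exact hX n)

lemma groupCohomology.exact_map_δ (hX : X.ShortExact) (n : ℕ) :
    Function.Exact (groupCohomology.map (.id G) X.g n).hom (δ hX n (n + 1) rfl).hom :=
  (ShortComplex.ShortExact.moduleCat_exact_iff_function_exact _).1 (mapShortComplex₃_exact hX rfl)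

lemma groupCohomology.exact_δ_map (hX : X.ShortExact) (n : ℕ) :
    Function.Exact (δ hX n (n + 1) rfl).hom (groupCohomology.map (.id G) X.f (n + 1)).hom :=
  (ShortComplex.ShortExact.moduleCat_exact_iff_function_exact _).1 (mapShortComplex₁_exact hX rfl)

/-- If `Hⁿ(X₁) → Hⁿ(X₂)` is onto, the connecting map out of `Hⁿ(X₃)` is
injective. -/
lemma groupCohomology.injective_δ (hX : X.ShortExact) (n : ℕ)
    (h : Function.Surjective (groupCohomology.map (.id G) X.f n).hom) :
    Function.Injective (δ hX n (n + 1) rfl).hom := by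
  rw [injective_iff_map_eq_zero]
  intro x hx
  obtain ⟨y, rfl⟩ := (exact_map_δ hX n x).1 hx
  obtain ⟨z, rfl⟩ := h y
  exact (exact_map_map hX n).apply_apply_eq_zero z

lemma groupCohomology.rank_zero (A : Rep.{0} k G) :
    Module.rank k (groupCohomology A 0) = Module.rank k A.ρ.invariants :=
  (H0Iso A).toLinearEquiv.rank_eq

/-- A monomorphism between representations whose invariants are lines is onto in degree zero. -/
lemma groupCohomology.surjective_map_zero {A B : Rep.{0} k G} (f : A ⟶ B) [Mono f]
    (hA : Module.rank k (groupCohomology A 0) = 1) (hB : Module.rank k (groupCohomology B 0) = 1) :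
    Function.Surjective (groupCohomology.map (.id G) f 0).hom := by
  have : FiniteDimensional k (groupCohomology A 0) :=
    Module.rank_lt_aleph0_iff.1 (hA ▸ Cardinal.one_lt_aleph0)
  have : FiniteDimensional k (groupCohomology B 0) :=
    Module.rank_lt_aleph0_iff.1 (hB ▸ Cardinal.one_lt_aleph0)
  refine (LinearMap.injective_iff_surjective_of_finrank_eq_finrank ?_).1
    ((ModuleCat.mono_iff_injective _).1 inferInstance)
  rw [Module.finrank, Module.finrank, hA, hB]

end LongExactSequence

section KleinFour

open Rep

variable (k : Type) [Field k]

/-- The trivial representation of the Klein four-group. -/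
abbrev kleinTriv : Rep.{0} k KleinFour := Rep.trivial k KleinFour k

/-- The permutation representation on functions on the first factor. -/
abbrev kleinFst : Rep.{0} k KleinFour := funTwo (MonoidHom.fst _ _) (kleinTriv k)

/-- The regular representation, as functions on both factors. -/
abbrev kleinReg : Rep.{0} k KleinFour := funTwo (MonoidHom.snd _ _) (kleinFst k)

/-- The regular representation is coinduced from the trivial subgroup. -/
def kleinRegIsoCoind : kleinReg k ≅
    Rep.coind (⊥ : Subgroup KleinFour).subtype (Rep.trivial k (⊥ : Subgroup KleinFour) k) :=
  Rep.mkIso <| .mk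
    { toFun := fun f => ⟨fun h => f h.2 h.1, fun g h => by
        obtain rfl : g = 1 := Subsingleton.elim _ _
        simp⟩
      invFun := fun F c d => F.1 (d, c)
      map_add' := fun _ _ => rfl
      map_smul' := fun _ _ => rfl
      left_inv := fun _ => rfl
      right_inv := fun _ => rfl } fun g => rfl

lemma isZero_kleinReg (n : ℕ) : Limits.IsZero (groupCohomology (kleinReg k) (n + 1)) :=
  (isZero_groupCohomology_succ_of_subsingleton _ n).of_iso
    ((functor k KleinFour (n + 1)).mapIso (kleinRegIsoCoind k) ≪≫ groupCohomology.coindIso _ _)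

lemma rank_zero_kleinTriv : Module.rank k (groupCohomology (kleinTriv k) 0) = 1 := by
  rw [rank_zero, show (kleinTriv k).ρ.invariants = ⊤ from eq_top_iff.2 fun _ _ _ => rfl, rank_top]
  exact Module.rank_self k

/-- Evaluation at the identity identifies the invariants of `kleinFst` with `k`. -/
def kleinFstInvariants : (kleinFst k).ρ.invariants ≃ₗ[k] k where
  toFun f := f.1 1
  invFun a := ⟨fun _ => a, fun _ => rfl⟩
  map_add' _ _ := rfl
  map_smul' _ _ := rfl
  left_inv f := Subtype.ext <| funext fun c => by
    rw [← congrFun (f.2 (c, 1)) 1]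
    exact congrArg f.1 (one_mul c)
  right_inv _ := rfl

/-- Evaluation at the identity identifies the invariants of `kleinReg` with `k`. -/
def kleinRegInvariants : (kleinReg k).ρ.invariants ≃ₗ[k] k where
  toFun f := f.1 1 1
  invFun a := ⟨fun _ _ => a, fun _ => rfl⟩
  map_add' _ _ := rfl
  map_smul' _ _ := rfl
  left_inv f := Subtype.ext <| funext fun c => funext fun d => by
    rw [← congrFun (congrFun (f.2 (d, c)) 1) 1]
    exact congrArg₂ f.1 (one_mul c) (one_mul d)
  right_inv _ := rfl

lemma rank_zero_kleinFst : Module.rank k (groupCohomology (kleinFst k) 0) = 1 := by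
  rw [rank_zero, (kleinFstInvariants k).rank_eq, Module.rank_self]

lemma rank_zero_kleinReg : Module.rank k (groupCohomology (kleinReg k) 0) = 1 := by
  rw [rank_zero, (kleinRegInvariants k).rank_eq, Module.rank_self]

variable [CharP k 2]

/-- The extension of `kleinFst` by itself with middle term `kleinReg`. -/
lemma shortExact_kleinReg : (funTwo.shortComplex (MonoidHom.snd _ _) (kleinFst k)).ShortExact :=
  funTwo.shortExact _ _

lemma bijective_δ_kleinFst (n : ℕ) :
    Function.Bijective (δ (shortExact_kleinReg k) n (n + 1) rfl).hom := by
  refine ⟨?_, fun x => (exact_δ_map (shortExact_kleinReg k) n x).1 ?_⟩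
  · cases n with
    | zero =>
      have := (shortExact_kleinReg k).mono_f
      exact injective_δ _ _ (surjective_map_zero _ (rank_zero_kleinFst k) (rank_zero_kleinReg k))
    | succ n =>
      exact (ModuleCat.mono_iff_injective _).1
        (mono_δ_of_isZero (shortExact_kleinReg k) _ (isZero_kleinReg k n))
  · have := ModuleCat.subsingleton_of_isZero (isZero_kleinReg k n)
    exact Subsingleton.elim _ _

lemma rank_kleinFst (n : ℕ) : Module.rank k (groupCohomology (kleinFst k) n) = 1 := by
  induction n with
  | zero => exact rank_zero_kleinFst k
  | succ n ih => rw [← ih, (LinearEquiv.ofBijective _ (bijective_δ_kleinFst k n)).rank_eq]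

/-- The map `Hⁿ(E, k) → Hⁿ(E, C₂ → k)`, which the Shapiro isomorphism identifies with restriction
to the second factor, is onto. -/
lemma surjective_map_const (n : ℕ) : Function.Surjective
    (groupCohomology.map (A := kleinTriv k) (.id KleinFour)
      (funTwo.const (MonoidHom.fst _ _) (kleinTriv k)) n).hom := by
  induction n with
  | zero =>
    have := (funTwo.shortExact (MonoidHom.fst _ _) (kleinTriv k)).mono_f
    exact surjective_map_zero _ (rank_zero_kleinTriv k) (rank_zero_kleinFst k)
  | succ n ih =>
    have h := funTwo.δ_naturality (MonoidHom.snd _ _) (A := kleinTriv k) (B := kleinFst k)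
      (funTwo.const (MonoidHom.fst _ _) (kleinTriv k)) n
    intro y
    obtain ⟨z, rfl⟩ := (bijective_δ_kleinFst k n).2 y
    obtain ⟨x, rfl⟩ := ih z
    exact ⟨_, LinearMap.congr_fun (congrArg ModuleCat.Hom.hom h) x⟩

lemma rank_kleinTriv (n : ℕ) : Module.rank k (groupCohomology (kleinTriv k) n) = n + 1 := by
  induction n with
  | zero => simpa using rank_zero_kleinTriv k
  | succ n ih =>
    have hX := funTwo.shortExact (MonoidHom.fst _ _) (kleinTriv k)
    have hker := (exact_δ_map hX n).linearMap_ker_eq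
    rw [← LinearMap.rank_range_add_rank_ker (groupCohomology.map (A := kleinTriv k) (.id KleinFour)
      (funTwo.const (MonoidHom.fst _ _) (kleinTriv k)) (n + 1)).hom,
      LinearMap.range_eq_top.2 (surjective_map_const k (n + 1)), rank_top, rank_kleinFst, hker,
      rank_range_of_injective _ (injective_δ hX n (surjective_map_const k n)), ih]
    push_cast
    exact add_comm _ _

end KleinFour

/-- For a field `k` of characteristic 2 and the Klein four-group `E`, the group
cohomology `H^n(E; k)` with trivial coefficients has `k`-dimension `n + 1`
(the additive content of `H^•(E; k) ≅ k[u, v]`). -/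
theorem kleinFour_groupCohomology_finrank (k : Type) [Field k] [CharP k 2] (n : ℕ) :
    FiniteDimensional k (groupCohomology (Rep.trivial k KleinFour k) n) ∧
    Module.finrank k (groupCohomology (Rep.trivial k KleinFour k) n) = n + 1 := by
  have h : Module.rank k (groupCohomology (Rep.trivial k KleinFour k) n) =
      ((n + 1 : ℕ) : Cardinal) := mod_cast rank_kleinTriv k n
  exact ⟨Module.rank_lt_aleph0_iff.1 (h ▸ Cardinal.natCast_lt_aleph0),
    Module.finrank_eq_of_rank_eq h⟩
end
end
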